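/- Let n ≥ 3, let L be the line (path) on [n] with binomial edge ideal I_L, let g = x_1 y_n − x_n y_1, and let J_G̃ be the binomial edge ideal of the complete graph on [n]. Then the Hilbert series of S/((I_L : g) + J_G̃) is H(S/((I_L : g) + J_G̃), t) = (1 + (n−1)t − (n−1)t^{n−2} − t^{n−1}) / (1 − t)^{n+1}. -/

import Mathlib

/-!
Write `I = (I_L : g) + J` with `J = J_G̃`. The quotient `S/J` is the Segre ring
`K[a z_i, b z_i]`, with basis the monomials `z^d a^p b^{|d|-p}`, `0 ≤ p ≤ |d|`; setting `b = 1` loses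
nothing, so a basis element is a pair `(d, p)`. The claim behind the formula is that the image of `I`
is spanned by the pairs `(d, p)` with `d` *full*, i.e. `d_j ≥ 1` for all interior vertices
`j = 2, …, n-1`.

* Monomials of full multidegree lie in `I_L : g` (`monomial_mem_colon`): a relation
  `w_k f_{1,k+1} ≡ w_{k+1} f_{1,k}` modulo `I_L`, with `w = x` or `w = y`, removes the interior
  vertices one at a time from `w_2 ⋯ w_{n-1} g`.
* Conversely, let `h g ∈ I_L` and let `j` be an interior vertex. The map `segre₂ j` to a domain
  sends `z_j` to `0` and uses independent parameters `a`, `a'` on the two sides of `j`. It kills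
  `I_L` and sends `g` to `(a - a') z_1 z_n ≠ 0`, so it kills `h`; putting `a' = a` shows that
  `z_j` divides the Segre image of `h` (`segre_colon`).

Together with the fact that monomials with equal Segre image are congruent modulo `J`
(`monomial_sub_mem`), this identifies `I` with the kernel of an explicit linear map
(`mem_ideal_iff`). Hence the Hilbert function of `S/I` in degree `m` is `(m + 1)` times the number of
non-full `d` with `|d| = m`, and these numbers have generating function
`(1 - t^{n-2}) / (1 - t)^n` (`card_badSet`, `allSeries_mul`). The Hilbert series is therefore the
derivative of `F = (t - t^{n-1}) / (1 - t)^n`, and differentiating `F (1 - t)^n = t - t^{n-1}` gives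
the formula.
-/

open MvPolynomial CategoryTheory Opposite

noncomputable section

namespace BEIPaper

/-- The `x_i` variable of the polynomial ring `K[x_1,…,x_n,y_1,…,y_n]`,
which we realize as `MvPolynomial (σ ⊕ σ) K`, where `Sum.inl i ↦ x_i` and
`Sum.inr i ↦ y_i`. -/
def xv (K : Type) [Field K] {σ : Type} (i : σ) : MvPolynomial (σ ⊕ σ) K :=
  X (Sum.inl i)

/-- The `y_i` variable. -/
def yv (K : Type) [Field K] {σ : Type} (i : σ) : MvPolynomial (σ ⊕ σ) K :=
  X (Sum.inr i)

/-- The binomial edge ideal of a graph `G` on the vertex set `[n]`: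
generated by the binomials `x_i y_j - x_j y_i` for edges `{i, j}` with `i < j`. -/
def bei (K : Type) [Field K] {n : ℕ} (G : SimpleGraph (Fin n)) :
    Ideal (MvPolynomial (Fin n ⊕ Fin n) K) :=
  Ideal.span {f | ∃ i j : Fin n, i < j ∧ G.Adj i j ∧
    f = xv K i * yv K j - xv K j * yv K i}

/-- The prime ideal `P_T(G)`: generated by `{x_i, y_i : i ∈ T}` together with the
binomial edge ideals of the complete graphs on the vertex sets of the connected
components of the induced subgraph of `G` on `[n] ∖ T` (equivalently, all binomials
`x_i y_j - x_j y_i` where `i < j` lie outside `T` in the same connected component). -/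
def PT (K : Type) [Field K] {n : ℕ} (G : SimpleGraph (Fin n)) (T : Set (Fin n)) :
    Ideal (MvPolynomial (Fin n ⊕ Fin n) K) :=
  Ideal.span ((xv K '' T) ∪ (yv K '' T) ∪
    {f | ∃ i j : Fin n, ∃ (hi : i ∈ Tᶜ) (hj : j ∈ Tᶜ), i < j ∧
      (G.induce Tᶜ).Reachable ⟨i, hi⟩ ⟨j, hj⟩ ∧
      f = xv K i * yv K j - xv K j * yv K i})

/-- `c(T)`: the number of connected components of the induced subgraph of `G`
on `[n] ∖ T`. -/
def ncomp {n : ℕ} (G : SimpleGraph (Fin n)) (T : Set (Fin n)) : ℕ :=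
  Nat.card (G.induce Tᶜ).ConnectedComponent

/-- The graded (irrelevant) maximal ideal of a polynomial ring, generated by
all the variables. -/
def mIdeal (K : Type) [Field K] (σ : Type) : Ideal (MvPolynomial σ K) :=
  Ideal.span (Set.range X)

/-- The depth of a module `M` with respect to an ideal `I`: the supremum of lengths
of `M`-regular sequences consisting of elements of `I`. -/
def depth {R : Type} [CommRing R] (I : Ideal R) (M : Type) [AddCommGroup M]
    [Module R M] : ℕ∞ :=
  sSup {k : ℕ∞ | ∃ rs : List R, (rs.length : ℕ∞) = k ∧ (∀ r ∈ rs, r ∈ I) ∧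
    RingTheory.Sequence.IsRegular M rs}

/-- The (Krull) dimension of a module: the Krull dimension of `R` modulo the
annihilator of `M`. -/
def mdim (R : Type) [CommRing R] (M : Type) [AddCommGroup M] [Module R M] :
    WithBot ℕ∞ :=
  ringKrullDim (R ⧸ Module.annihilator R M)

/-- `M` is a Cohen-Macaulay `R`-module of dimension `d` (depth and dimension both
being taken with respect to the given (maximal graded) ideal `I`). -/
def IsCMmodOfDim {R : Type} [CommRing R] (I : Ideal R) (M : Type) [AddCommGroup M]
    [Module R M] (d : ℕ) : Prop :=
  (depth I M : WithBot ℕ∞) = mdim R M ∧ mdim R M = (d : ℕ∞)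

/-- The quotient `S/J` of a polynomial ring `S` by an ideal `J` is a Cohen-Macaulay
ring: its depth with respect to the graded maximal ideal equals its Krull dimension. -/
def IsCMQuot (K : Type) [Field K] {σ : Type} (J : Ideal (MvPolynomial σ K)) : Prop :=
  (depth (mIdeal K σ) (MvPolynomial σ K ⧸ J) : WithBot ℕ∞) =
    ringKrullDim (MvPolynomial σ K ⧸ J)

/-- `S/I` is approximately Cohen-Macaulay: there is a homogeneous element `x` of
positive degree in the irrelevant ideal of `R = S/I` (i.e. the image of a homogeneous
polynomial `f` of positive degree) such that `R/x^m R = S/(I + (f^m))` is a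
Cohen-Macaulay ring of dimension `dim R - 1` for all `m ≥ 1`. -/
def IsACM (K : Type) [Field K] {σ : Type} (I : Ideal (MvPolynomial σ K)) : Prop :=
  ∃ (d : ℕ) (f : MvPolynomial σ K), 0 < d ∧ f.IsHomogeneous d ∧
    ∀ m : ℕ, 1 ≤ m →
      IsCMQuot K (I ⊔ Ideal.span {f ^ m}) ∧
      ringKrullDim (MvPolynomial σ K ⧸ (I ⊔ Ideal.span {f ^ m})) + 1 =
        ringKrullDim (MvPolynomial σ K ⧸ I)

/-- The Hilbert series of `S/I` (for a homogeneous ideal `I`), as a power series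
over `ℤ`: the `m`-th coefficient is the `K`-dimension of the degree-`m` graded
component of `S/I`, i.e. of the image of the space of degree-`m` homogeneous
polynomials in `S/I`. -/
def hseries (K : Type) [Field K] {σ : Type} (I : Ideal (MvPolynomial σ K)) :
    PowerSeries ℤ :=
  PowerSeries.mk fun m =>
    (Module.finrank K (Submodule.map (Ideal.Quotient.mkₐ K I).toLinearMap
      (homogeneousSubmodule σ K m)) : ℤ)

/-- The formal power series variable `t`. -/
def t : PowerSeries ℤ := PowerSeries.X

/-- The equidimensional part `U_S(I)` of (a minimal primary decomposition of) `I`: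
the intersection of the primary components `I(p)` over the associated primes `p`
with `dim S/p = dim S/I`.  Any such `p` is a minimal prime of `I`, so its primary
component is independent of the decomposition and equals the saturation
`{x | ∃ s ∉ p, s * x ∈ I}`. -/
def USideal {R : Type} [CommRing R] (I : Ideal R) : Ideal R :=
  sInf {J | ∃ p ∈ associatedPrimes R (R ⧸ I),
    ringKrullDim (R ⧸ p) = ringKrullDim (R ⧸ I) ∧
    J = Ideal.span {x | ∃ s ∉ p, s * x ∈ I}}

/-- `Ext_S^j(S/I, S)`, as an object of `ModuleCat S`.  The `i`-th module of
deficiency of `S/I` is `ω^i(S/I) = Ext_S^{2n-i}(S/I, S)`, i.e. `extSI K I (2*n - i)`. -/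
def extSI (K : Type) [Field K] {σ : Type} (I : Ideal (MvPolynomial σ K)) (j : ℕ) :
    ModuleCat (MvPolynomial σ K) :=
  ((Ext (MvPolynomial σ K) (ModuleCat (MvPolynomial σ K)) j).obj
      (op (ModuleCat.of (MvPolynomial σ K) (MvPolynomial σ K ⧸ I)))).obj
    (ModuleCat.of (MvPolynomial σ K) (MvPolynomial σ K))

/-- The line (path) graph on `[n]` (with `[n]` realized as `Fin n`), with edges
`{i, i+1}` for `1 ≤ i ≤ n-1`. -/
def lineG (n : ℕ) : SimpleGraph (Fin n) :=
  SimpleGraph.fromRel (fun a b => (b : ℕ) = (a : ℕ) + 1)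

/-- The cycle of length `n` on `[n]` (with `[n]` realized as `Fin n`), with edges
`{i, i+1}` for `1 ≤ i ≤ n-1` together with `{1, n}`. -/
def cycleG (n : ℕ) : SimpleGraph (Fin n) :=
  SimpleGraph.fromRel (fun a b =>
    (b : ℕ) = (a : ℕ) + 1 ∨ ((a : ℕ) = 0 ∧ (b : ℕ) = n - 1))

/-- The binomial `g = x_1 y_n - x_n y_1`. -/
def gElt (K : Type) [Field K] {n : ℕ} (hn : 0 < n) : MvPolynomial (Fin n ⊕ Fin n) K :=
  xv K ⟨0, hn⟩ * yv K ⟨n - 1, by omega⟩ - xv K ⟨n - 1, by omega⟩ * yv K ⟨0, hn⟩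

/-- The `i`-th generator `x_2 x_3 ⋯ x_i y_{i+1} ⋯ y_{n-1}` (for `i = 1, …, n-1`)
of the monomial ideal `M`; the product ranges over the labels `p = 2, …, n-1`
(`0`-indexed: `q = p - 1` with `1 ≤ q ≤ n-2`), taking `x_p` when `p ≤ i` and
`y_p` when `p > i`. -/
def mgen (K : Type) [Field K] (n : ℕ) (i : ℕ) : MvPolynomial (Fin n ⊕ Fin n) K :=
  ∏ q ∈ Finset.univ.filter (fun q : Fin n => 0 < (q : ℕ) ∧ (q : ℕ) < n - 1),
    (if (q : ℕ) + 1 ≤ i then xv K q else yv K q)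

/-- The monomial ideal
`M = (x_2 x_3 ⋯ x_{n-1}, x_2 x_3 ⋯ x_{n-2} y_{n-1}, …, x_2 y_3 ⋯ y_{n-1}, y_2 y_3 ⋯ y_{n-1})`. -/
def monoM (K : Type) [Field K] (n : ℕ) : Ideal (MvPolynomial (Fin n ⊕ Fin n) K) :=
  Ideal.span {f | ∃ i : ℕ, 1 ≤ i ∧ i ≤ n - 1 ∧ f = mgen K n i}

/-- The degree of a vertex, as the cardinality of its neighbor set. -/
def deg {n : ℕ} (G : SimpleGraph (Fin n)) (v : Fin n) : ℕ :=
  Nat.card (G.neighborSet v)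

/-- A tree is 3-star like if no vertex has degree `≥ 4`, and either there is at most
one vertex of degree `3`, or there are exactly two vertices of degree `3` and they
are joined by an edge. -/
def ThreeStarLike {n : ℕ} (G : SimpleGraph (Fin n)) : Prop :=
  (∀ v, deg G v ≤ 3) ∧
    ({v | deg G v = 3}.Subsingleton ∨
      ∃ a b : Fin n, a ≠ b ∧ G.Adj a b ∧ {v | deg G v = 3} = {a, b})

/-- The graph `G′` on `[n+1]` obtained from a graph `G` on `[n]` by attaching the
new edge `{v, n+1}` at the vertex `v` of `G`. -/
def extendG {n : ℕ} (G : SimpleGraph (Fin n)) (v : Fin n) : SimpleGraph (Fin (n + 1)) :=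
  SimpleGraph.fromRel (fun a b =>
    (∃ (ha : a ≠ Fin.last n) (hb : b ≠ Fin.last n),
      G.Adj (a.castPred ha) (b.castPred hb)) ∨
    (a = Fin.castSucc v ∧ b = Fin.last n))

/-- The inclusion `S = K[x_1,…,x_n,y_1,…,y_n] → S′ = K[x_1,…,x_{n+1},y_1,…,y_{n+1}]`. -/
def liftS (K : Type) [Field K] (n : ℕ) :
    MvPolynomial (Fin n ⊕ Fin n) K →ₐ[K] MvPolynomial (Fin (n + 1) ⊕ Fin (n + 1)) K :=
  rename (Sum.map Fin.castSucc Fin.castSucc)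

/-! ### Monomials: the exponent data `(zdeg, xdeg)` -/

section Helpers

open Finset

variable {K : Type} [Field K] {n : ℕ}

/-- The multidegree of the monomial with exponent `u` for the `ℤⁿ`-grading in which both `x_i`
and `y_i` have degree `e_i`. -/
def zdeg (u : Fin n ⊕ Fin n →₀ ℕ) : Fin n →₀ ℕ :=
  Finsupp.equivFunOnFinite.symm fun i => u (Sum.inl i) + u (Sum.inr i)

/-- The total degree in the `x`-variables of the monomial with exponent `u`. -/
def xdeg (u : Fin n ⊕ Fin n →₀ ℕ) : ℕ := ∑ i, u (Sum.inl i)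

/-- The exponent of the image of a monomial under the Segre map `x_i ↦ a z_i`, `y_i ↦ z_i`. -/
def segreExp (u : Fin n ⊕ Fin n →₀ ℕ) : (Fin n →₀ ℕ) × ℕ := (zdeg u, xdeg u)

/-- The interior vertices of the path, i.e. the labels `2, …, n-1`. -/
def Mid (j : Fin n) : Prop := 0 < (j : ℕ) ∧ (j : ℕ) < n - 1

/-- A multidegree is full if it is positive at every interior vertex. -/
def Full (d : Fin n →₀ ℕ) : Prop := ∀ j, Mid j → d j ≠ 0

@[simp] lemma zdeg_apply (u : Fin n ⊕ Fin n →₀ ℕ) (i : Fin n) :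
    zdeg u i = u (Sum.inl i) + u (Sum.inr i) := rfl

lemma degree_eq_zdeg (u : Fin n ⊕ Fin n →₀ ℕ) : u.degree = (zdeg u).degree := by
  simp [Finsupp.degree_eq_sum, Finset.sum_add_distrib]

lemma edge_mem {G : SimpleGraph (Fin n)} {i j : Fin n} (h : G.Adj i j) :
    xv K i * yv K j - xv K j * yv K i ∈ bei K G := by
  rcases lt_or_gt_of_ne h.ne with hij | hij
  · exact Ideal.subset_span ⟨i, j, hij, h, rfl⟩
  · rw [← neg_sub]
    exact neg_mem (Ideal.subset_span ⟨j, i, hij, h.symm, rfl⟩)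

/-- Two monomials with the same image under the Segre map are congruent modulo the binomial edge
ideal of the complete graph: exchanging `x_i y_j` for `x_j y_i` brings the exponents of the
`x`-variables closer together. -/
lemma monomial_sub_mem (N : ℕ) : ∀ u v : Fin n ⊕ Fin n →₀ ℕ, segreExp u = segreExp v →
    ∑ i, (u (Sum.inl i) - v (Sum.inl i)) = N →
    monomial u (1 : K) - monomial v 1 ∈ bei K (⊤ : SimpleGraph (Fin n)) := by
  induction N with
  | zero =>
    intro u v h hN
    have hz : ∀ i, u (Sum.inl i) + u (Sum.inr i) = v (Sum.inl i) + v (Sum.inr i) := fun i =>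
      DFunLike.congr_fun (congrArg Prod.fst h) i
    have hx : ∑ i, u (Sum.inl i) = ∑ i, v (Sum.inl i) := congrArg Prod.snd h
    have hle : ∀ i ∈ univ, u (Sum.inl i) ≤ v (Sum.inl i) := fun i _ => by
      have := (Finset.sum_eq_zero_iff.1 hN) i (mem_univ i)
      omega
    have heq := (Finset.sum_eq_sum_iff_of_le hle).1 hx
    have : u = v := by
      ext (i | i)
      · exact heq i (mem_univ i)
      · have := heq i (mem_univ i)
        have := hz i
        omega
    simp [this]
  | succ N ih =>
    intro u v h hN
    have hz : ∀ i, u (Sum.inl i) + u (Sum.inr i) = v (Sum.inl i) + v (Sum.inr i) := fun i =>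
      DFunLike.congr_fun (congrArg Prod.fst h) i
    have hx : ∑ i, u (Sum.inl i) = ∑ i, v (Sum.inl i) := congrArg Prod.snd h
    obtain ⟨i, -, hi⟩ : ∃ i ∈ univ, v (Sum.inl i) < u (Sum.inl i) := by
      by_contra! hcon
      have : ∑ i, (u (Sum.inl i) - v (Sum.inl i)) = 0 :=
        Finset.sum_eq_zero fun i hi => Nat.sub_eq_zero_of_le (hcon i hi)
      omega
    obtain ⟨j, -, hj⟩ : ∃ j ∈ univ, u (Sum.inl j) < v (Sum.inl j) := by
      by_contra! hcon
      exact absurd hx (Finset.sum_lt_sum hcon ⟨i, mem_univ i, hi⟩).ne'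
    have hij : i ≠ j := by rintro rfl; omega
    have hzj := hz j
    obtain ⟨w, rfl⟩ : ∃ w,
        u = w + (Finsupp.single (Sum.inl i) 1 + Finsupp.single (Sum.inr j) 1) := by
      refine ⟨u - (Finsupp.single (Sum.inl i) 1 + Finsupp.single (Sum.inr j) 1), ?_⟩
      rw [tsub_add_cancel_of_le]
      rintro (k | k)
      · by_cases hk : i = k
        · subst hk; simp; omega
        · simp [hk]
      · by_cases hk : j = k
        · subst hk; simp; omega
        · simp [hk]
    set u' := w + (Finsupp.single (Sum.inl j) 1 + Finsupp.single (Sum.inr i) 1) with hu'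
    have h1 : segreExp u' = segreExp v := by
      rw [← h]
      refine Prod.ext ?_ ?_
      · ext k
        simp [segreExp, hu', Finsupp.single_apply]
        ring
      · simp [segreExp, xdeg, hu', Finset.sum_add_distrib, Finsupp.single_apply]
    have h2 : ∑ k, (u' (Sum.inl k) - v (Sum.inl k)) = N := by
      have key : ∑ k, ((u' (Sum.inl k) - v (Sum.inl k)) + if i = k then 1 else 0) = N + 1 := by
        rw [← hN]
        refine Finset.sum_congr rfl fun k _ => ?_
        simp only [hu', Finsupp.add_apply, Finsupp.single_apply, Sum.inl.injEq, reduceCtorEq,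
          if_false, add_zero] at hi hj ⊢
        by_cases hk : i = k
        · subst hk; simp [hij.symm] at hi ⊢; omega
        · by_cases hk' : j = k
          · subst hk'; simp [hij] at hj ⊢; omega
          · simp [hk, hk']
      rw [Finset.sum_add_distrib] at key
      simpa using key
    have h3 : monomial (w + (Finsupp.single (Sum.inl i) 1 + Finsupp.single (Sum.inr j) 1)) (1 : K)
        - monomial u' 1 = monomial w 1 * (xv K i * yv K j - xv K j * yv K i) := by
      simp [hu', xv, yv, X, mul_sub, monomial_mul]
    have := add_mem (Ideal.mul_mem_left _ (monomial w 1)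
      (edge_mem (K := K) (G := (⊤ : SimpleGraph (Fin n))) hij)) (ih u' v h1 h2)
    rw [← h3] at this
    simpa using this

/-! ### Monomials of full multidegree lie in the colon ideal -/

/-- Modulo the ideal of the path, `w_2 ⋯ w_{k} (x_1 y_{k+1} - x_{k+1} y_1) = 0` for every choice
of `w_j ∈ {x_j, y_j}`. The induction on `k` uses the three-term relation
`x_k f_{1,k+1} = x_{k+1} f_{1,k} + x_1 f_{k,k+1}` and its analogue for `y_k`. -/
lemma prod_mul_mem (hn : 0 < n) (w : ℕ → MvPolynomial (Fin n ⊕ Fin n) K)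
    (hw : ∀ j : Fin n, Mid j → w j = xv K j ∨ w j = yv K j) (k : ℕ) : ∀ hk : k + 1 < n,
    (∏ j ∈ Finset.Ico 1 (k + 1), w j) *
      (xv K ⟨0, hn⟩ * yv K ⟨k + 1, hk⟩ - xv K ⟨k + 1, hk⟩ * yv K ⟨0, hn⟩) ∈
        bei K (lineG n) := by
  have hadj : ∀ (j : ℕ) (hj : j + 1 < n), (lineG n).Adj ⟨j, by omega⟩ ⟨j + 1, hj⟩ := by
    intro j hj
    simp [lineG]
  induction k with
  | zero =>
    intro hk
    simpa using edge_mem (K := K) (hadj 0 hk)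
  | succ k ih =>
    intro hk
    have h1 := ih (by omega)
    have h2 := edge_mem (K := K) (hadj (k + 1) hk)
    rw [Finset.prod_Ico_succ_top (by omega)]
    set P := ∏ j ∈ Finset.Ico 1 (k + 1), w j
    rcases hw ⟨k + 1, by omega⟩ ⟨by simp, by simp; omega⟩ with h | h
    · simp only at h
      rw [h]
      convert add_mem (Ideal.mul_mem_left _ (xv K ⟨k + 1 + 1, hk⟩) h1)
        (Ideal.mul_mem_left _ (P * xv K ⟨0, hn⟩) h2) using 1
      ring
    · simp only at h
      rw [h]
      convert add_mem (Ideal.mul_mem_left _ (yv K ⟨k + 1 + 1, hk⟩) h1)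
        (Ideal.mul_mem_left _ (P * yv K ⟨0, hn⟩) h2) using 1
      ring

/-- The colon ideal `I_L : g`. -/
def colonIdeal (K : Type) [Field K] {n : ℕ} (hn : 0 < n) : Ideal (MvPolynomial (Fin n ⊕ Fin n) K) :=
  (bei K (lineG n)).colon (Ideal.span {gElt K hn})

lemma mem_colonIdeal (hn : 0 < n) (f : MvPolynomial (Fin n ⊕ Fin n) K) :
    f ∈ colonIdeal K hn ↔ f * gElt K hn ∈ bei K (lineG n) := by
  unfold colonIdeal
  exact Ideal.mem_colon_span_singleton

/-- A monomial of full multidegree is divisible by some `w_2 ⋯ w_{n-1}` with `w_j ∈ {x_j, y_j}`,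
hence it multiplies `g` into `I_L`. -/
lemma monomial_mem_colon (hn : 2 ≤ n) (u : Fin n ⊕ Fin n →₀ ℕ) (hu : Full (zdeg u)) :
    monomial u (1 : K) ∈ colonIdeal K (show 0 < n by omega) := by
  classical
  -- `e j` is a variable among `x_j, y_j` that divides the monomial.
  have hex : ∀ j : Fin n, ∃ s : Fin n ⊕ Fin n, (s = Sum.inl j ∨ s = Sum.inr j) ∧
      (Mid j → u s ≠ 0) := by
    intro j
    by_cases h : u (Sum.inl j) = 0
    · refine ⟨Sum.inr j, Or.inr rfl, fun hj => ?_⟩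
      have := hu j hj
      simp only [zdeg_apply] at this
      omega
    · exact ⟨Sum.inl j, Or.inl rfl, fun _ => h⟩
  choose e he hue using hex
  let s : ℕ → (Fin n ⊕ Fin n →₀ ℕ) := fun j =>
    if h : j < n then Finsupp.single (e ⟨j, h⟩) 1 else 0
  have hle : ∑ j ∈ Finset.Ico 1 (n - 1), s j ≤ u := by
    intro t
    rw [Finsupp.finsetSum_apply]
    -- At most one `j` contributes to the exponent of the variable `t`.
    obtain ⟨i, hi⟩ : ∃ i : Fin n, t = Sum.inl i ∨ t = Sum.inr i := by
      rcases t with i | i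
      exacts [⟨i, Or.inl rfl⟩, ⟨i, Or.inr rfl⟩]
    have hzero : ∀ j : ℕ, j ≠ i → s j t = 0 := by
      intro j hj
      by_cases h : j < n
      · have h1 : (⟨j, h⟩ : Fin n) ≠ i := fun h' => hj (congrArg Fin.val h')
        have h2 : e ⟨j, h⟩ ≠ t := by
          rcases he ⟨j, h⟩ with h3 | h3 <;> rcases hi with h4 | h4 <;> simp [h3, h4, h1]
        simp [s, h, h2]
      · simp [s, h]
    by_cases hmem : (i : ℕ) ∈ Finset.Ico 1 (n - 1)
    · rw [Finset.sum_eq_single_of_mem _ hmem fun j _ hj => hzero j hj]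
      have hmid : Mid i := by
        rw [Finset.mem_Ico] at hmem
        exact ⟨by omega, hmem.2⟩
      have := hue i hmid
      simp only [s, i.2, dif_pos, Fin.eta, Finsupp.single_apply]
      split_ifs with h
      · rw [← h]; omega
      · exact Nat.zero_le _
    · rw [Finset.sum_eq_zero fun j hj => hzero j fun h => hmem (h ▸ hj)]
      exact Nat.zero_le _
  have hprod := prod_mul_mem (K := K) (n := n) (by omega) (fun j => monomial (s j) 1)
    (fun j _ => by
      rcases he j with h | h
      · left; simp [s, h, xv, X]
      · right; simp [s, h, yv, X]) (n - 2) (by omega)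
  rw [mem_colonIdeal, ← tsub_add_cancel_of_le hle,
    ← one_mul (1 : K), ← monomial_mul, monomial_sum_one, mul_assoc]
  refine Ideal.mul_mem_left _ _ ?_
  have h1 : n - 2 + 1 = n - 1 := by omega
  simpa only [gElt, h1] using hprod

/-! ### Segre maps killing an interior vertex -/

/-- The variable `z_i`, replaced by `0` if `i = j`. -/
def zv (R : Type) [CommRing R] (j i : Fin n) : MvPolynomial (Fin n) R :=
  if i = j then 0 else X i

/-- The Segre map `x_i ↦ a z_i`, `y_i ↦ z_i` with values in `K[a][z]`, composed with `z_j ↦ 0`. -/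
def segre (K : Type) [Field K] (j : Fin n) :
    MvPolynomial (Fin n ⊕ Fin n) K →ₐ[K] MvPolynomial (Fin n) (Polynomial K) :=
  aeval (Sum.elim (fun i => C Polynomial.X * zv _ j i) (fun i => zv _ j i))

/-- The map with values in `K[a][a'][z]` that sends `z_j` to `0` and uses two independent
parameters `a`, `a'` on the two components of the path with `j` removed. -/
def segre₂ (K : Type) [Field K] (j : Fin n) :
    MvPolynomial (Fin n ⊕ Fin n) K →ₐ[K] MvPolynomial (Fin n) (Polynomial (Polynomial K)) :=
  aeval (Sum.elim
    (fun i => C (if i < j then Polynomial.C (Polynomial.X : Polynomial K) else Polynomial.X) *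
      zv _ j i)
    (fun i => zv _ j i))

/-- Specializing `a' = a` turns `segre₂` into `segre`. -/
lemma map_segre₂ (j : Fin n) (f : MvPolynomial (Fin n ⊕ Fin n) K) :
    map (Polynomial.evalRingHom (Polynomial.X : Polynomial K)) (segre₂ K j f) = segre K j f := by
  have : ((map (Polynomial.evalRingHom (Polynomial.X : Polynomial K))).comp
      (segre₂ K j).toRingHom) = (segre K j).toRingHom := by
    refine MvPolynomial.ringHom_ext (fun r => ?_) ?_
    · simp [segre, segre₂, MvPolynomial.algebraMap_apply, Polynomial.algebraMap_apply]
    · rintro (i | i)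
      · by_cases hi : i = j
        · simp [segre, segre₂, zv, hi]
        · by_cases hij : i < j <;> simp [segre, segre₂, zv, hi, hij]
      · by_cases hi : i = j <;> simp [segre, segre₂, zv, hi]
  exact RingHom.congr_fun this f

lemma segre₂_line (j : Fin n) : bei K (lineG n) ≤ RingHom.ker (segre₂ K j) := by
  rw [bei, Ideal.span_le]
  rintro _ ⟨i, k, hik, hadj, rfl⟩
  have hk : (k : ℕ) = i + 1 := by
    simp only [lineG, SimpleGraph.fromRel_adj] at hadj
    have : (i : ℕ) < k := hik
    omega
  simp only [SetLike.mem_coe, RingHom.mem_ker, xv, yv, segre₂, map_sub, map_mul, aeval_X,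
    Sum.elim_inl, Sum.elim_inr]
  by_cases hi : i = j
  · simp [zv, hi]
  · by_cases hk' : k = j
    · simp [zv, hk']
    · have hiff : i < j ↔ k < j := by
        have h1 : (i : ℕ) ≠ j := fun h => hi (Fin.ext h)
        have h2 : (k : ℕ) ≠ j := fun h => hk' (Fin.ext h)
        rw [Fin.lt_def, Fin.lt_def]
        omega
      simp only [hiff]
      ring

lemma segre₂_g (hn : 0 < n) {j : Fin n} (hj : Mid j) : segre₂ K j (gElt K hn) ≠ 0 := by
  have h1 : (⟨0, hn⟩ : Fin n) < j := hj.1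
  have h2 : ¬ (⟨n - 1, by omega⟩ : Fin n) < j := not_lt.2 hj.2.le
  have h3 : (⟨n - 1, by omega⟩ : Fin n) ≠ j := fun h => by
    have := congrArg Fin.val h
    have := hj.2
    simp at *
    omega
  have : segre₂ K j (gElt K hn) = C (Polynomial.C Polynomial.X - Polynomial.X) *
      (X ⟨0, hn⟩ * X ⟨n - 1, by omega⟩) := by
    simp only [gElt, xv, yv, segre₂, map_sub, map_mul, aeval_X, Sum.elim_inl, Sum.elim_inr, h1, h2,
      zv, h1.ne, h3, if_true, if_false]
    ring
  rw [this]
  refine mul_ne_zero ?_ (mul_ne_zero (X_ne_zero _) (X_ne_zero _))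
  rw [Ne, C_eq_zero]
  intro h
  have := congrArg (fun p => Polynomial.coeff p 1) h
  simp at this

/-- The colon ideal is killed by the maps `segre j`: the target of `segre₂ j` is a domain in which
the ideal of the path vanishes, but `g` does not. -/
lemma segre_colon (hn : 0 < n) {j : Fin n} (hj : Mid j) :
    colonIdeal K hn ≤ RingHom.ker (segre K j) := by
  intro f hf
  rw [mem_colonIdeal] at hf
  have h := segre₂_line j hf
  rw [RingHom.mem_ker, map_mul] at h
  have h0 := (mul_eq_zero.1 h).resolve_right (segre₂_g hn hj)
  rw [RingHom.mem_ker, ← map_segre₂, h0, map_zero]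

lemma segre_complete (j : Fin n) : bei K (⊤ : SimpleGraph (Fin n)) ≤ RingHom.ker (segre K j) := by
  rw [bei, Ideal.span_le]
  rintro _ ⟨i, k, -, -, rfl⟩
  simp only [SetLike.mem_coe, RingHom.mem_ker, xv, yv, segre, map_sub, map_mul, aeval_X,
    Sum.elim_inl, Sum.elim_inr]
  ring

/-- A monomial in which a variable of the vertex `j` occurs is killed; any other monomial is sent
to the one with exponent `segreExp`. -/
lemma segre_monomial (j : Fin n) (u : Fin n ⊕ Fin n →₀ ℕ) :
    segre K j (monomial u 1) =
      if zdeg u j = 0 then monomial (zdeg u) (Polynomial.X ^ xdeg u) else 0 := by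
  have h : segre K j (monomial u 1) = C Polynomial.X ^ xdeg u * ∏ i, zv _ j i ^ zdeg u i := by
    rw [segre, aeval_monomial, Finsupp.prod_fintype _ _ (by simp), Fintype.prod_sum_type]
    simp only [map_one, one_mul, Sum.elim_inl, Sum.elim_inr, mul_pow, Finset.prod_mul_distrib,
      Finset.prod_pow_eq_pow_sum, zdeg_apply, pow_add, xdeg]
    ring
  rw [h]
  split_ifs with h0
  · rw [monomial_eq, Finsupp.prod_fintype _ _ (by simp), map_pow]
    congr 1
    refine Finset.prod_congr rfl fun i _ => ?_
    by_cases hi : i = j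
    · rw [hi, h0]; simp
    · simp [zv, hi]
  · rw [Finset.prod_eq_zero (Finset.mem_univ j), mul_zero]
    simp only [zv, if_true]
    exact zero_pow h0

/-! ### The ideal as the kernel of a linear map to a space with a monomial basis -/

open Classical in
/-- The linear map sending a monomial to its Segre image if the multidegree is not full, and to
`0` otherwise. -/
def segreLin (K : Type) [Field K] (n : ℕ) :
    MvPolynomial (Fin n ⊕ Fin n) K →ₗ[K] ((Fin n →₀ ℕ) × ℕ →₀ K) :=
  (basisMonomials (Fin n ⊕ Fin n) K).constr K fun u =>
    if Full (zdeg u) then 0 else Finsupp.single (segreExp u) 1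

open Classical in
lemma segreLin_monomial (u : Fin n ⊕ Fin n →₀ ℕ) :
    segreLin K n (monomial u 1) = if Full (zdeg u) then 0 else Finsupp.single (segreExp u) 1 := by
  have := (basisMonomials (Fin n ⊕ Fin n) K).constr_basis K (fun u =>
    if Full (zdeg u) then (0 : (Fin n →₀ ℕ) × ℕ →₀ K) else Finsupp.single (segreExp u) 1) u
  simpa [segreLin] using this

/-- For a multidegree vanishing at an interior vertex `j`, the coordinate of `segreLin` is a
coefficient of `segre j`. -/
lemma segreLin_apply {j : Fin n} (hj : Mid j) (d : Fin n →₀ ℕ) (p : ℕ) (hd : d j = 0)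
    (f : MvPolynomial (Fin n ⊕ Fin n) K) :
    segreLin K n f (d, p) = (coeff d (segre K j f)).coeff p := by
  classical
  have : (Finsupp.lapply (d, p)).comp (segreLin K n) =
      (Polynomial.lcoeff K p).comp ((((lcoeff (Polynomial K) d).restrictScalars K)).comp
        (segre K j).toLinearMap) := by
    refine (basisMonomials _ _).ext fun u => ?_
    simp only [coe_basisMonomials, LinearMap.comp_apply, segreLin_monomial, Finsupp.lapply_apply,
      AlgHom.toLinearMap_apply, segre_monomial, LinearMap.restrictScalars_apply, lcoeff_apply,
      Polynomial.lcoeff_apply]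
    by_cases hu : segreExp u = (d, p)
    · obtain ⟨h1, h2⟩ := Prod.mk.inj hu
      have : ¬ Full d := fun h => h j hj hd
      simp [h1, h2, hu, this, hd]
    · have h1 : (if Full (zdeg u) then (0 : (Fin n →₀ ℕ) × ℕ →₀ K)
          else Finsupp.single (segreExp u) 1) (d, p) = 0 := by
        split_ifs <;> simp [hu]
      rw [h1]
      split_ifs
      · rw [coeff_monomial]
        split_ifs with h2
        · rw [Polynomial.coeff_X_pow, if_neg]
          exact fun h3 => hu (Prod.ext h2 h3.symm)
        · simp
      · simp
  exact LinearMap.congr_fun this f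

lemma segreLin_apply_full (d : Fin n →₀ ℕ) (p : ℕ) (hd : Full d)
    (f : MvPolynomial (Fin n ⊕ Fin n) K) : segreLin K n f (d, p) = 0 := by
  classical
  have : (Finsupp.lapply (d, p)).comp (segreLin K n) = 0 := by
    refine (basisMonomials _ _).ext fun u => ?_
    simp only [coe_basisMonomials, LinearMap.comp_apply, segreLin_monomial, Finsupp.lapply_apply,
      LinearMap.zero_apply]
    split_ifs with h
    · rfl
    · rw [Finsupp.single_apply, if_neg]
      rintro hu
      have hz : zdeg u = d := congrArg Prod.fst hu
      exact h (hz.symm ▸ hd)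
  exact LinearMap.congr_fun this f

/-- The ideal `(I_L : g) + J` is the kernel of `segreLin`. -/
lemma mem_ideal_iff (hn : 2 ≤ n) (f : MvPolynomial (Fin n ⊕ Fin n) K) :
    f ∈ colonIdeal K (show 0 < n by omega) ⊔ bei K (⊤ : SimpleGraph (Fin n)) ↔
      segreLin K n f = 0 := by
  classical
  constructor
  · intro hf
    ext ⟨d, p⟩
    by_cases hd : Full d
    · exact segreLin_apply_full d p hd f
    · simp only [Full, not_forall, not_not] at hd
      obtain ⟨j, hj, hd⟩ := hd
      rw [segreLin_apply hj d p hd]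
      have : segre K j f = 0 := sup_le (segre_colon _ hj) (segre_complete j) hf
      simp [this]
  · intro hf
    set I := colonIdeal K (show 0 < n by omega) ⊔ bei K (⊤ : SimpleGraph (Fin n))
    -- A linear section of the Segre map on monomials; every polynomial is congruent modulo `I`
    -- to the section applied to its image.
    let s : ((Fin n →₀ ℕ) × ℕ →₀ K) →ₗ[K] MvPolynomial (Fin n ⊕ Fin n) K :=
      Finsupp.linearCombination K fun e => monomial (Function.invFun segreExp e) 1
    have key : (I.restrictScalars K).mkQ.comp (s.comp (segreLin K n)) =
        (I.restrictScalars K).mkQ := by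
      refine (basisMonomials _ _).ext fun u => ?_
      simp only [coe_basisMonomials, LinearMap.comp_apply, segreLin_monomial]
      rw [← sub_eq_zero, ← map_sub, Submodule.mkQ_apply, Submodule.Quotient.mk_eq_zero,
        Submodule.restrictScalars_mem]
      split_ifs with h
      · rw [map_zero, zero_sub]
        exact neg_mem (Ideal.mem_sup_left (monomial_mem_colon hn u h))
      · simp only [s, Finsupp.linearCombination_single, one_smul]
        exact Ideal.mem_sup_right (monomial_sub_mem _ _ _
          (Function.invFun_eq ⟨u, rfl⟩) rfl)
    have := LinearMap.congr_fun key f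
    rw [LinearMap.comp_apply, LinearMap.comp_apply, hf, map_zero, map_zero, eq_comm,
      Submodule.mkQ_apply, Submodule.Quotient.mk_eq_zero] at this
    exact this

/-! ### The Hilbert function -/

/-- The number of exponent vectors of length `n` and total degree `m`. -/
def allCount (n m : ℕ) : ℕ := (finsuppAntidiag (univ : Finset (Fin n)) m).card

lemma mem_anti (d : Fin n →₀ ℕ) (m : ℕ) :
    d ∈ finsuppAntidiag (univ : Finset (Fin n)) m ↔ d.degree = m := by
  simp [Finsupp.degree_eq_sum]

open Classical in
/-- The exponent vectors of total degree `m` vanishing at some interior vertex. -/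
def badSet (n m : ℕ) : Finset (Fin n →₀ ℕ) :=
  (finsuppAntidiag (univ : Finset (Fin n)) m).filter fun d => ¬ Full d

lemma mem_badSet (d : Fin n →₀ ℕ) (m : ℕ) : d ∈ badSet n m ↔ d.degree = m ∧ ¬ Full d := by
  classical rw [badSet, Finset.mem_filter, mem_anti]

/-- Every pair of a multidegree `d` and an `x`-degree `p ≤ |d|` comes from a monomial. -/
lemma exists_segreExp (d : Fin n →₀ ℕ) (p : ℕ) (hp : p ≤ d.degree) :
    ∃ u, segreExp u = (d, p) := by
  obtain ⟨g, hg, rfl⟩ := Finsupp.exists_le_degree_eq d p hp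
  refine ⟨Finsupp.equivFunOnFinite.symm (Sum.elim g (d - g)), Prod.ext ?_ ?_⟩
  · ext i
    have := hg i
    simp [segreExp]
    omega
  · simp [segreExp, xdeg, Finsupp.degree_eq_sum]

lemma xdeg_le (u : Fin n ⊕ Fin n →₀ ℕ) : xdeg u ≤ (zdeg u).degree := by
  rw [Finsupp.degree_eq_sum, xdeg]
  exact Finset.sum_le_sum fun i _ => Nat.le_add_right _ _

/-- The image of the forms of degree `m` has as a basis the pairs `(d, p)` with `|d| = m`, `d` not
full, and `0 ≤ p ≤ m`. -/
lemma map_homogeneous (m : ℕ) :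
    (homogeneousSubmodule (Fin n ⊕ Fin n) K m).map (segreLin K n) =
      Finsupp.supported K K (badSet n m ×ˢ Finset.range (m + 1) : Finset _) := by
  classical
  have hspan : homogeneousSubmodule (Fin n ⊕ Fin n) K m =
      Submodule.span K ((fun u => monomial u 1) '' {u | u.degree = m}) := by
    rw [homogeneousSubmodule_eq_finsupp_supported, AddMonoidAlgebra.supported_eq_span_single]
    rfl
  rw [hspan, Submodule.map_span, Finsupp.supported_eq_span_single]
  apply le_antisymm
  · rw [Submodule.span_le]
    rintro _ ⟨_, ⟨u, hu, rfl⟩, rfl⟩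
    simp only [SetLike.mem_coe, segreLin_monomial]
    split_ifs with h
    · exact zero_mem _
    · refine Submodule.subset_span ⟨segreExp u, ?_, rfl⟩
      have hu' : (zdeg u).degree = m := (degree_eq_zdeg u).symm.trans hu
      have := xdeg_le u
      simp only [Finset.coe_product, Set.mem_prod, Finset.mem_coe, mem_badSet, Finset.mem_range,
        segreExp]
      exact ⟨⟨hu', h⟩, by omega⟩
  · rw [Submodule.span_le]
    rintro _ ⟨⟨d, p⟩, h, rfl⟩
    simp only [Finset.coe_product, Set.mem_prod, Finset.mem_coe, mem_badSet, Finset.mem_range] at h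
    obtain ⟨u, hu⟩ := exists_segreExp d p (by omega)
    have hd : zdeg u = d := congrArg Prod.fst hu
    refine Submodule.subset_span ⟨monomial u 1, ⟨u, ?_, rfl⟩, ?_⟩
    · rw [Set.mem_ofPred_eq, degree_eq_zdeg, hd]
      exact h.1.1
    · rw [segreLin_monomial, hd, if_neg h.1.2, hu]

lemma finrank_map_eq_of_ker_eq {V W W' : Type} [AddCommGroup V] [Module K V] [AddCommGroup W]
    [Module K W] [AddCommGroup W'] [Module K W'] (f : V →ₗ[K] W) (g : V →ₗ[K] W')
    (h : ∀ v, f v = 0 ↔ g v = 0) (H : Submodule K V) :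
    Module.finrank K (H.map f) = Module.finrank K (H.map g) := by
  have hk : (f.domRestrict H).ker = (g.domRestrict H).ker := by
    ext v
    simpa using h v
  have e := ((f.domRestrict H).quotKerEquivRange.symm.trans
    (Submodule.quotEquivOfEq _ _ hk)).trans (g.domRestrict H).quotKerEquivRange
  rw [LinearMap.range_domRestrict, LinearMap.range_domRestrict] at e
  exact e.finrank_eq

/-- The Hilbert function: `m + 1` times the number of non-full multidegrees of total degree
`m`. -/
lemma coeff_hseries (hn : 2 ≤ n) (m : ℕ) :
    PowerSeries.coeff m (hseries K
      (colonIdeal K (show 0 < n by omega) ⊔ bei K (⊤ : SimpleGraph (Fin n)))) =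
      ((badSet n m).card : ℤ) * (m + 1) := by
  rw [hseries, PowerSeries.coeff_mk, finrank_map_eq_of_ker_eq _ (segreLin K n), map_homogeneous,
    (Finsupp.supportedEquivFinsupp _).finrank_eq]
  · rw [Module.finrank_finsupp_self]
    simp
  · intro f
    rw [← mem_ideal_iff hn]
    simp [Ideal.Quotient.eq_zero_iff_mem]

/-! ### Summing the series -/

/-- Subtracting the indicator of the interior vertices identifies the full exponent vectors of
degree `m + (n - 2)` with all exponent vectors of degree `m`. -/
lemma card_badSet (hn : 2 ≤ n) (m : ℕ) :
    ((badSet n m).card : ℤ) =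
      allCount n m - if n - 2 ≤ m then (allCount n (m - (n - 2)) : ℤ) else 0 := by
  classical
  let δ : Fin n →₀ ℕ := Finsupp.equivFunOnFinite.symm fun j => if Mid j then 1 else 0
  have hδ : ∀ j, δ j = if Mid j then 1 else 0 := fun j => rfl
  have hdeg : δ.degree = n - 2 := by
    rw [Finsupp.degree_eq_sum]
    simp only [hδ]
    have h := Fin.sum_univ_eq_sum_range (fun j : ℕ => if 0 < j ∧ j < n - 1 then 1 else 0) n
    have hM : ∀ j : Fin n, (if Mid j then 1 else 0) =
        if 0 < (j : ℕ) ∧ (j : ℕ) < n - 1 then 1 else 0 := fun j => if_congr Iff.rfl rfl rfl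
    rw [Finset.sum_congr rfl fun j _ => hM j, h]
    rw [Finset.sum_boole]
    have : (Finset.range n).filter (fun j => 0 < j ∧ j < n - 1) = Finset.Ico 1 (n - 1) := by
      ext j; simp; omega
    rw [this]; simp; omega
  have hfull : ∀ d : Fin n →₀ ℕ, Full d ↔ δ ≤ d := by
    intro d
    refine forall_congr' fun j => ?_
    rw [hδ]
    by_cases hj : Mid j
    · simp [hj, Nat.one_le_iff_ne_zero]
    · simp [hj]
  have hsplit := Finset.card_filter_add_card_filter_not
    (s := finsuppAntidiag (univ : Finset (Fin n)) m) (p := fun d => Full d)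
  have hgood : ((finsuppAntidiag (univ : Finset (Fin n)) m).filter fun d => Full d).card =
      if n - 2 ≤ m then allCount n (m - (n - 2)) else 0 := by
    split_ifs with h
    · symm
      refine Finset.card_bij (fun d _ => d + δ) ?_ ?_ ?_
      · intro d hd
        rw [mem_anti] at hd
        rw [Finset.mem_filter, mem_anti, hfull]
        refine ⟨?_, le_add_of_nonneg_left zero_le⟩
        rw [map_add, hd, hdeg]; omega
      · intro a _ b _ hab
        exact add_right_cancel hab
      · intro d hd
        rw [Finset.mem_filter, mem_anti, hfull] at hd
        refine ⟨d - δ, ?_, tsub_add_cancel_of_le hd.2⟩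
        have := congrArg Finsupp.degree (tsub_add_cancel_of_le hd.2)
        rw [map_add] at this
        rw [mem_anti]; omega
    · rw [Finset.card_eq_zero, Finset.filter_eq_empty_iff]
      intro d hd hf
      rw [mem_anti] at hd
      have := Finsupp.degree_mono ((hfull d).1 hf)
      omega
  have h1 : (badSet n m).card = ((finsuppAntidiag (univ : Finset (Fin n)) m).filter
    fun d => ¬ Full d).card := rfl
  rw [h1]
  have h2 : allCount n m = (finsuppAntidiag (univ : Finset (Fin n)) m).card := rfl
  rw [hgood, ← h2] at hsplit
  rw [← hsplit]
  push_cast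
  ring

/-- `∑ C(n-1+m, n-1) t^m = (1 - t)⁻ⁿ`. -/
lemma allSeries_mul (hn : 0 < n) :
    (PowerSeries.mk fun m => (allCount n m : ℤ)) * (1 - PowerSeries.X) ^ n = 1 := by
  have h : (PowerSeries.mk fun m => (allCount n m : ℤ)) = (PowerSeries.invOneSubPow ℤ n).val := by
    rw [PowerSeries.invOneSubPow_val_eq_mk_sub_one_add_choose_of_pos ℤ n hn]
    ext m
    simp only [PowerSeries.coeff_mk, allCount, card_finsuppAntidiag_nat_eq_choose, Finset.card_univ,
      Fintype.card_fin]
    congr 1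
    rw [Nat.choose_symm_add, show n + m - 1 = n - 1 + m by omega]
  rw [h, ← PowerSeries.invOneSubPow_inv_eq_one_sub_pow ℤ n]
  simp

end Helpers

/-- Let `n ≥ 3`, let `L` be the line (path) on `[n]` with binomial
edge ideal `I_L`, `g = x_1 y_n − x_n y_1`, and `J_G̃` the binomial edge ideal of the
complete graph on `[n]`.  Then
`H(S/((I_L : g) + J_G̃), t) = (1 + (n−1)t − (n−1)t^{n−2} − t^{n−1}) / (1 − t)^{n+1}`. -/
theorem statement17 (K : Type) [Field K] (n : ℕ) (hn : 3 ≤ n) :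
    hseries K ((bei K (lineG n)).colon (Ideal.span {gElt K (show 0 < n by omega)}) ⊔
        bei K (⊤ : SimpleGraph (Fin n))) * (1 - t) ^ (n + 1) =
      1 + ((n : PowerSeries ℤ) - 1) * t - ((n : PowerSeries ℤ) - 1) * t ^ (n - 2) -
        t ^ (n - 1) := by
  have hI := coeff_hseries (K := K) (n := n) (by omega)
  rw [colonIdeal] at hI
  set h := hseries K ((bei K (lineG n)).colon (Ideal.span {gElt K (show 0 < n by omega)}) ⊔
    bei K (⊤ : SimpleGraph (Fin n)))
  let A : PowerSeries ℤ := PowerSeries.mk fun m => (allCount n m : ℤ)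
  let F : PowerSeries ℤ := (PowerSeries.X - PowerSeries.X ^ (n - 1)) * A
  have hA : A * (1 - PowerSeries.X) ^ n = 1 := allSeries_mul (by omega)
  -- The factor `m + 1` in the Hilbert function makes the series a derivative.
  have hF : h = PowerSeries.derivative ℤ F := by
    ext m
    have hX : F = PowerSeries.X * (A - PowerSeries.X ^ (n - 2) * A) := by
      have : n - 1 = n - 2 + 1 := by omega
      simp only [F, this, pow_succ]
      ring
    rw [hI, PowerSeries.coeff_derivative, hX, PowerSeries.coeff_succ_X_mul, map_sub,
      PowerSeries.coeff_X_pow_mul', card_badSet (by omega)]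
    simp [A]
  have hFA : F * (1 - PowerSeries.X) ^ n = PowerSeries.X - PowerSeries.X ^ (n - 1) := by
    rw [mul_assoc, hA, mul_one]
  have hD := congrArg (PowerSeries.derivative ℤ) hFA
  obtain ⟨k, rfl⟩ : ∃ k, n = k + 3 := ⟨n - 3, by omega⟩
  rw [show k + 3 - 1 = k + 2 by omega] at hFA hD
  rw [show k + 3 - 1 = k + 2 by omega, show k + 3 - 2 = k + 1 by omega, hF, t]
  rw [Derivation.leibniz, PowerSeries.derivative_pow, map_sub, map_sub,
    PowerSeries.derivative_pow, PowerSeries.derivative_X, PowerSeries.derivative_one] at hD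
  simp only [smul_eq_mul, show k + 3 - 1 = k + 2 by omega, show k + 2 - 1 = k + 1 by omega] at hD
  push_cast at hD ⊢
  -- The product rule for `F * (1 - t) ^ n`, multiplied by `1 - t`.
  linear_combination (1 - PowerSeries.X) * hD + ((k : PowerSeries ℤ) + 3) * hFA

end BEIPaper
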